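/- Kernel of DTGV² (Corollary 4.3 for order 2): for u ∈ L¹(Ω) with Ω connected, DTGV²_λ(u) = 0 if and only if u agrees almost everywhere on Ω with a polynomial of degree less than 2, i.e. an affine function x ↦ c₀ + c₁x₁ + c₂x₂. -/

import Mathlib

open MeasureTheory Filter
open scoped ENNReal Topology Pointwise

noncomputable section

abbrev E2 := EuclideanSpace ℝ (Fin 2)

/-- Build a vector of `ℝ²` from its coordinates. -/
def vec2 (x y : ℝ) : E2 := (WithLp.equiv 2 (Fin 2 → ℝ)).symm ![x, y]

/-- The elliptical set `E^{a,θ}`. -/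
def Ellip (a θ : ℝ) : Set E2 :=
  {x : E2 | (x 0 * Real.cos θ + x 1 * Real.sin θ) ^ 2 +
      ((-(x 0) * Real.sin θ + x 1 * Real.cos θ) / a) ^ 2 ≤ 1}

/-- Partial derivative in the `i`-th coordinate direction. -/
def pd (i : Fin 2) (f : E2 → ℝ) (x : E2) : ℝ :=
  fderiv ℝ f x (EuclideanSpace.single i 1)

/-- Divergence of a vector field on `ℝ²`. -/
def divVec (v : E2 → E2) (x : E2) : ℝ :=
  pd 0 (fun y => v y 0) x + pd 1 (fun y => v y 1) x

/-- `C¹` vector fields compactly supported in `Ω`. -/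
def Cc1 (Ω : Set E2) (v : E2 → E2) : Prop :=
  ContDiff ℝ 1 v ∧ HasCompactSupport v ∧ tsupport v ⊆ Ω

/-- The directional total variation `DTV^{a,θ}`. -/
def DTV (Ω : Set E2) (a θ : ℝ) (u : E2 → ℝ) : ℝ≥0∞ :=
  ⨆ v ∈ {v : E2 → E2 | Cc1 Ω v ∧ ∀ x ∈ Ω, v x ∈ Ellip a θ},
    ENNReal.ofReal (∫ x in Ω, u x * divVec v x)

/-- The total variation. -/
def TV (Ω : Set E2) (u : E2 → ℝ) : ℝ≥0∞ :=
  ⨆ v ∈ {v : E2 → E2 | Cc1 Ω v ∧ ∀ x ∈ Ω, ‖v x‖ ≤ 1},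
    ENNReal.ofReal (∫ x in Ω, u x * divVec v x)

abbrev Mat2 := Matrix (Fin 2) (Fin 2) ℝ

/-- The rotation matrix `R_θ`. -/
def Rmat (θ : ℝ) : Mat2 := !![Real.cos θ, -Real.sin θ; Real.sin θ, Real.cos θ]

/-- The matrix `Λ_a = diag(1,a)`. -/
def Lmat (a : ℝ) : Mat2 := !![1, 0; 0, a]

/-- Symmetric `2×2` matrices whose rows and columns lie in `S ⊆ ℝ²`. -/
def rowcol (S : Set E2) : Set Mat2 :=
  {V : Mat2 | V.IsSymm ∧ (∀ i : Fin 2, vec2 (V i 0) (V i 1) ∈ S) ∧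
    ∀ j : Fin 2, vec2 (V 0 j) (V 1 j) ∈ S}

/-- `E^{a,θ}_{2×2}`. -/
def EllipM (a θ : ℝ) : Set Mat2 := rowcol (Ellip a θ)

/-- `B_{2×2}`. -/
def BallM : Set Mat2 := rowcol (Metric.closedBall 0 1)

/-- Divergence of a (symmetric) matrix field. -/
def divMat (W : E2 → Mat2) (x : E2) : E2 :=
  vec2 (pd 0 (fun y => W y 0 0) x + pd 1 (fun y => W y 0 1) x)
    (pd 0 (fun y => W y 1 0) x + pd 1 (fun y => W y 1 1) x)

/-- Second-order divergence of a matrix field. -/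
def div2Mat (W : E2 → Mat2) (x : E2) : ℝ :=
  pd 0 (pd 0 (fun y => W y 0 0)) x + pd 1 (pd 1 (fun y => W y 1 1)) x +
    2 * pd 0 (pd 1 (fun y => W y 0 1)) x

/-- `C²` symmetric-matrix fields compactly supported in `Ω`. -/
def Cc2Sym (Ω : Set E2) (W : E2 → Mat2) : Prop :=
  (∀ i j : Fin 2, ContDiff ℝ 2 (fun x => W x i j)) ∧ HasCompactSupport W ∧
    tsupport W ⊆ Ω ∧ ∀ x, (W x).IsSymm

/-- The second-order directional total generalized variation `DTGV²_λ`. -/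
def DTGV2 (Ω : Set E2) (a θ l0 l1 : ℝ) (u : E2 → ℝ) : ℝ≥0∞ :=
  ⨆ W ∈ {W : E2 → Mat2 | Cc2Sym Ω W ∧ (∀ x ∈ Ω, W x ∈ l0 • EllipM a θ) ∧
      ∀ x ∈ Ω, divMat W x ∈ l1 • Ellip a θ},
    ENNReal.ofReal (∫ x in Ω, u x * div2Mat W x)

/-- The second-order total generalized variation `TGV²_λ`. -/
def TGV2 (Ω : Set E2) (l0 l1 : ℝ) (u : E2 → ℝ) : ℝ≥0∞ :=
  ⨆ W ∈ {W : E2 → Mat2 | Cc2Sym Ω W ∧ (∀ x ∈ Ω, W x ∈ l0 • BallM) ∧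
      ∀ x ∈ Ω, divMat W x ∈ Metric.closedBall 0 l1},
    ENNReal.ofReal (∫ x in Ω, u x * div2Mat W x)

/-! A `C²` compactly supported test field multiplied by a small constant of either sign is
admissible for `DTGV2`, because `0` is interior to the elliptical sets; hence `DTGV2` vanishes at
`u` iff `u` annihilates every `div2Mat W`. Since `div² (φ • (v ⊗ w + w ⊗ v) / 2) = D²φ (v, w)`, this
says that the weak Hessian of `u` is zero. Mollifications of `u` then have zero Hessian, so they are
affine on every ball well inside `Ω`. The points at which a sequence of affine maps converges form
an affine subspace; by almost everywhere convergence it has positive measure, hence is the whole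
space, and the limit is affine. As affine maps agreeing almost everywhere on a nonempty open set are
equal, the local affine representatives of `u` coincide along the connected set `Ω`. -/

section AffineMaps

theorem exists_affineMap_of_tendsto {k V P W ι : Type*} [Ring k] [AddCommGroup V] [Module k V]
    [AddTorsor V P] [AddCommGroup W] [Module k W] [TopologicalSpace W] [IsTopologicalAddGroup W]
    [ContinuousConstSMul k W] [T2Space W] {l : Filter ι} [l.NeBot] {A : ι → P →ᵃ[k] W} {s : Set P}
    (hs : affineSpan k s = ⊤) (h : ∀ p ∈ s, ∃ y, Tendsto (A · p) l (𝓝 y)) :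
    ∃ B : P →ᵃ[k] W, ∀ p, Tendsto (A · p) l (𝓝 (B p)) := by
  have h_all (p : P) : ∃ y, Tendsto (A · p) l (𝓝 y) := by
    have hp : p ∈ affineSpan k s := hs ▸ AffineSubspace.mem_top k V p
    refine affineSpan_induction hp h ?_
    rintro c p q r ⟨y, hy⟩ ⟨z, hz⟩ ⟨t, ht⟩
    exact ⟨c • (y - z) + t, by simpa using ((hy.sub hz).const_smul c).add ht⟩
  choose f hf using h_all
  obtain ⟨p₀⟩ : Nonempty P := inferInstance
  have h_linear : Tendsto (fun i v ↦ (A i).linear v) l (𝓝 fun v ↦ f (v +ᵥ p₀) - f p₀) :=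
    tendsto_pi_nhds.2 fun v ↦ by simpa using (hf (v +ᵥ p₀)).sub (hf p₀)
  exact ⟨.mk' f (linearMapOfTendsto _ _ h_linear) p₀ fun p ↦ by simp [linearMapOfTendsto], hf⟩

theorem exists_affineMap_eqOn_of_fderiv_fderiv_eq_zero {E F : Type*} [NormedAddCommGroup E]
    [NormedSpace ℝ E] [NormedAddCommGroup F] [NormedSpace ℝ F] {f : E → F} {s : Set E}
    (hs : IsOpen s) (hs' : IsPreconnected s) (hf : DifferentiableOn ℝ f s)
    (hf' : DifferentiableOn ℝ (fderiv ℝ f) s) (hf'' : Set.EqOn (fderiv ℝ (fderiv ℝ f)) 0 s) :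
    ∃ A : E →ᵃ[ℝ] F, Set.EqOn f A s := by
  obtain ⟨L, hL⟩ := hs.exists_is_const_of_fderiv_eq_zero hs' hf' hf''
  obtain ⟨c, hc⟩ := hs.exists_eq_add_of_fderiv_eq hs' hf L.differentiable.differentiableOn
    fun x hx ↦ by rw [hL x hx, L.fderiv]
  exact ⟨(L : E →ₗ[ℝ] F).toAffineMap + AffineMap.const ℝ E c, hc⟩

variable {E : Type*} [NormedAddCommGroup E] [NormedSpace ℝ E] [FiniteDimensional ℝ E]
  [MeasurableSpace E] [BorelSpace E] {μ : Measure E} [μ.IsAddHaarMeasure]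

theorem affineSpan_eq_top_of_frequently_mem {s : Set E} (hs : ∃ᵐ x ∂μ, x ∈ s) :
    affineSpan ℝ s = ⊤ := by
  by_contra h
  exact frequently_ae_mem_iff.1 hs
    (measure_mono_null (subset_affineSpan ℝ s) (Measure.addHaar_affineSubspace μ _ h))

theorem affineMap_eq_of_ae_eq_restrict {W : Type*} [AddCommGroup W] [Module ℝ W] {A B : E →ᵃ[ℝ] W}
    {U : Set E} (hU : IsOpen U) (hU' : U.Nonempty) (h : A =ᵐ[μ.restrict U] B) : A = B := by
  have h_freq : ∃ᵐ x ∂μ, x ∈ U := frequently_ae_mem_iff.2 (hU.measure_pos μ hU').ne'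
  refine AffineMap.ext_on (s := {x | A x = B x})
    (affineSpan_eq_top_of_frequently_mem (μ := μ) ?_) fun _ ↦ id
  exact (h_freq.and_eventually (ae_imp_of_ae_restrict h)).mono fun x hx ↦ hx.2 hx.1

end AffineMaps

section Gluing

theorem exists_ae_eq_restrict_of_locally_ae_eq {X Y : Type*} [TopologicalSpace X]
    [SecondCountableTopology X] [MeasurableSpace X] {μ : Measure X} {𝒜 : Set (X → Y)} {Ω : Set X}
    {u : X → Y} (hΩ : IsConnected Ω)
    (h𝒜 : ∀ f ∈ 𝒜, ∀ g ∈ 𝒜, ∀ U, IsOpen U → U.Nonempty → f =ᵐ[μ.restrict U] g → f = g)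
    (hu : ∀ x ∈ Ω, ∃ U, IsOpen U ∧ x ∈ U ∧ ∃ f ∈ 𝒜, u =ᵐ[μ.restrict U] f) :
    ∃ f ∈ 𝒜, u =ᵐ[μ.restrict Ω] f := by
  obtain ⟨x₀, hx₀⟩ := hΩ.nonempty
  have : Nonempty (X → Y) := ⟨u⟩
  choose! U hU hxU f hf huf using hu
  have hU_nhds (x) (hx : x ∈ Ω) : U x ∈ 𝓝[Ω] x :=
    mem_nhdsWithin_of_mem_nhds ((hU x hx).mem_nhds (hxU x hx))
  have hf_const (x) (hx : x ∈ Ω) : f x = f x₀ := by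
    refine hΩ.isPreconnected.induction₂ (fun x y ↦ f x = f y) (fun x hx ↦ ?_)
      (fun _ _ _ _ _ _ ↦ Eq.trans) (fun _ _ _ _ ↦ Eq.symm) hx hx₀
    filter_upwards [hU_nhds x hx, self_mem_nhdsWithin] with y hyx hy
    refine h𝒜 _ (hf x hx) _ (hf y hy) (U x ∩ U y) ((hU x hx).inter (hU y hy)) ⟨y, hyx, hxU y hy⟩ ?_
    have hx_ae : u =ᵐ[μ.restrict (U x ∩ U y)] f x :=
      ae_restrict_of_ae_restrict_of_subset Set.inter_subset_left (huf x hx)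
    have hy_ae : u =ᵐ[μ.restrict (U x ∩ U y)] f y :=
      ae_restrict_of_ae_restrict_of_subset Set.inter_subset_right (huf y hy)
    exact hx_ae.symm.trans hy_ae
  obtain ⟨S, hSΩ, hS, hΩS⟩ := TopologicalSpace.countable_cover_nhdsWithin hU_nhds
  refine ⟨f x₀, hf x₀ hx₀, ae_restrict_of_ae_restrict_of_subset hΩS ?_⟩
  refine (ae_restrict_biUnion_iff U hS _).2 fun x hx ↦ ?_
  exact hf_const x (hSΩ hx) ▸ huf x (hSΩ hx)

end Gluing

section SecondDerivative

variable {𝕜 E F : Type*} [NontriviallyNormedField 𝕜] [NormedAddCommGroup E] [NormedSpace 𝕜 E]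
  [NormedAddCommGroup F] [NormedSpace 𝕜 F]

theorem fderiv_comp_const_sub (f : E → F) (x t : E) :
    fderiv 𝕜 (fun y ↦ f (x - y)) t = -fderiv 𝕜 f (x - t) := by
  simpa [sub_eq_add_neg, fderiv_comp_add_left] using
    fderiv_comp_smul (f := fun y ↦ f (x + y)) (x := t) (-1 : 𝕜)

theorem fderiv_fderiv_comp_const_sub (f : E → F) (x t : E) :
    fderiv 𝕜 (fderiv 𝕜 fun y ↦ f (x - y)) t = fderiv 𝕜 (fderiv 𝕜 f) (x - t) := by
  simp_rw [funext (fderiv_comp_const_sub f x), fderiv_fun_neg, fderiv_comp_const_sub, neg_neg]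

theorem fderiv_fderiv_apply {f : E → F} {x : E} (hf : DifferentiableAt 𝕜 (fderiv 𝕜 f) x)
    (v w : E) : fderiv 𝕜 (fun y ↦ fderiv 𝕜 f y w) x v = fderiv 𝕜 (fderiv 𝕜 f) x v w := by
  rw [fderiv_clm_apply hf (differentiableAt_const w)]
  simp

theorem tsupport_fderiv_fderiv_apply_subset (f : E → F) (v w : E) :
    tsupport (fun x ↦ fderiv 𝕜 (fderiv 𝕜 f) x v w) ⊆ tsupport f :=
  (tsupport_comp_subset (g := fun B : E →L[𝕜] E →L[𝕜] F ↦ B v w) rfl _).trans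
    ((tsupport_fderiv_subset 𝕜).trans (tsupport_fderiv_subset 𝕜))

end SecondDerivative

section Convolution

open scoped Convolution

variable {E F : Type*} [NormedAddCommGroup E] [NormedSpace ℝ E] [NormedAddCommGroup F]
  [NormedSpace ℝ F] [MeasurableSpace E] [BorelSpace E] [FiniteDimensional ℝ E] {μ : Measure E}
  [μ.IsAddHaarMeasure]

theorem convolution_precompL_apply {G H M : Type*} [NormedAddCommGroup G] [NormedSpace ℝ G]
    [NormedAddCommGroup H] [NormedSpace ℝ H] [NormedAddCommGroup M] [NormedSpace ℝ M]
    (L : G →L[ℝ] H →L[ℝ] F) {f : E → M →L[ℝ] G} {g : E → H} (hcf : HasCompactSupport f)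
    (hf : Continuous f) (hg : LocallyIntegrable g μ) (x : E) (m : M) :
    (f ⋆[L.precompL M, μ] g) x m = ((f · m) ⋆[L, μ] g) x := by
  have h := hcf.convolutionExists_left (L.precompL M :) hf hg x
  simp_rw [convolution_def, ContinuousLinearMap.integral_apply h]
  rfl

theorem fderiv_fderiv_convolution_left_apply {G H : Type*} [NormedAddCommGroup G] [NormedSpace ℝ G]
    [NormedAddCommGroup H] [NormedSpace ℝ H] (L : G →L[ℝ] H →L[ℝ] F) {f : E → G} {g : E → H}
    (hcf : HasCompactSupport f) (hf : ContDiff ℝ 2 f) (hg : LocallyIntegrable g μ) (x v w : E) :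
    fderiv ℝ (fderiv ℝ (f ⋆[L, μ] g)) x v w =
      ((fun t ↦ fderiv ℝ (fderiv ℝ f) t v w) ⋆[L, μ] g) x := by
  have hf' : ContDiff ℝ 1 (fderiv ℝ f) := hf.fderiv_right (by norm_num)
  have h_fderiv : fderiv ℝ (f ⋆[L, μ] g) = fderiv ℝ f ⋆[L.precompL E, μ] g := funext fun y ↦
    (hcf.hasFDerivAt_convolution_left L (hf.of_le (by norm_num)) hg y).fderiv
  have hcf'' : HasCompactSupport (fderiv ℝ (fderiv ℝ f)) := (hcf.fderiv ℝ).fderiv ℝ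
  have hcf''v : HasCompactSupport (fun t ↦ fderiv ℝ (fderiv ℝ f) t v) :=
    (hcf.fderiv ℝ).fderiv_apply ℝ v
  have hf'' : Continuous (fderiv ℝ (fderiv ℝ f)) := hf'.continuous_fderiv one_ne_zero
  rw [h_fderiv, ((hcf.fderiv ℝ).hasFDerivAt_convolution_left (L.precompL E) hf' hg x).fderiv,
    convolution_precompL_apply _ hcf'' hf'' hg,
    convolution_precompL_apply _ hcf''v (by fun_prop) hg]

end Convolution

section WeakHessian

open scoped Convolution

variable {E F : Type*} [NormedAddCommGroup E] [NormedSpace ℝ E] [NormedAddCommGroup F]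
  [NormedSpace ℝ F] [MeasurableSpace E]

/-- The distributional Hessian of `u : E → F` vanishes on `Ω`: its pairing
`∫_Ω D²φ(x)(v, w) • u(x) dμ(x)` with every `C²` function `φ` compactly supported in `Ω` is zero, for
all directions `v` and `w`. -/
def HasZeroWeakHessian (μ : Measure E) (Ω : Set E) (u : E → F) : Prop :=
  ∀ φ : E → ℝ, ContDiff ℝ 2 φ → HasCompactSupport φ → tsupport φ ⊆ Ω →
    ∀ v w, ∫ x in Ω, fderiv ℝ (fderiv ℝ φ) x v w • u x ∂μ = 0

theorem setIntegral_fderiv_fderiv_smul_eq_integral {φ : E → ℝ} {Ω : Set E} (hφ : tsupport φ ⊆ Ω)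
    (μ : Measure E) (v w : E) (u : E → F) :
    ∫ x in Ω, fderiv ℝ (fderiv ℝ φ) x v w • u x ∂μ =
      ∫ x, fderiv ℝ (fderiv ℝ φ) x v w • u x ∂μ := by
  refine setIntegral_eq_integral_of_forall_compl_eq_zero fun x hx ↦ ?_
  have h_zero : fderiv ℝ (fderiv ℝ φ) x v w = 0 :=
    image_eq_zero_of_notMem_tsupport (f := fun y ↦ fderiv ℝ (fderiv ℝ φ) y v w)
      fun h ↦ hx (hφ (tsupport_fderiv_fderiv_apply_subset φ v w h))
  rw [h_zero, zero_smul]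

theorem integrableOn_fderiv_fderiv_smul [OpensMeasurableSpace E] {μ : Measure E} {φ : E → ℝ}
    {Ω : Set E} {u : E → F} (hφ : ContDiff ℝ 2 φ) (hcφ : HasCompactSupport φ) (hφΩ : tsupport φ ⊆ Ω)
    (hu : LocallyIntegrableOn u Ω μ) (v w : E) :
    IntegrableOn (fun x ↦ fderiv ℝ (fderiv ℝ φ) x v w • u x) Ω μ := by
  have hφ' : ContDiff ℝ 1 (fderiv ℝ φ) := hφ.fderiv_right (by norm_num)
  have hφ'' : Continuous (fderiv ℝ (fderiv ℝ φ)) := hφ'.continuous_fderiv one_ne_zero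
  have h_supp : Function.support (fun x ↦ fderiv ℝ (fderiv ℝ φ) x v w • u x) ⊆ tsupport φ :=
    (Function.support_smul_subset_left _ u).trans
      ((subset_tsupport _).trans (tsupport_fderiv_fderiv_apply_subset φ v w))
  refine ((integrableOn_iff_integrable_of_support_subset h_supp).1 ?_).integrableOn
  exact (hu.integrableOn_compact_subset hφΩ hcφ).continuousOn_smul
    ((hφ''.clm_apply continuous_const).clm_apply continuous_const).continuousOn hcφ

namespace HasZeroWeakHessian

variable {μ : Measure E} {Ω Ω' : Set E} {u u' : E → F}

theorem mono (h : HasZeroWeakHessian μ Ω u) (hΩ' : Ω' ⊆ Ω) : HasZeroWeakHessian μ Ω' u := by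
  intro φ hφ hcφ hφΩ v w
  rw [setIntegral_fderiv_fderiv_smul_eq_integral hφΩ,
    ← setIntegral_fderiv_fderiv_smul_eq_integral (hφΩ.trans hΩ')]
  exact h φ hφ hcφ (hφΩ.trans hΩ') v w

theorem congr_ae (h : HasZeroWeakHessian μ Ω u) (huu' : u =ᵐ[μ.restrict Ω] u') :
    HasZeroWeakHessian μ Ω u' := by
  intro φ hφ hcφ hφΩ v w
  rw [← h φ hφ hcφ hφΩ v w]
  exact integral_congr_ae (huu'.mono fun x hx ↦ by simp only [hx])

variable [BorelSpace E] [FiniteDimensional ℝ E] [μ.IsAddHaarMeasure]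

theorem fderiv_fderiv_convolution_eq_zero (h : HasZeroWeakHessian μ Ω u)
    (hu : LocallyIntegrable u μ) {φ : E → ℝ} (hφ : ContDiff ℝ 2 φ) (hcφ : HasCompactSupport φ)
    {x : E} (hx : ∀ t ∈ tsupport φ, x - t ∈ Ω) :
    fderiv ℝ (fderiv ℝ (φ ⋆[ContinuousLinearMap.lsmul ℝ ℝ, μ] u)) x = 0 := by
  ext v w
  have h_supp : tsupport (fun t ↦ φ (x - t)) ⊆ Ω := fun t ht ↦ by
    have ht' : x - t ∈ tsupport φ :=
      tsupport_comp_subset_preimage φ (continuous_const.sub continuous_id) ht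
    simpa using hx _ ht'
  have h_zero := h (fun t ↦ φ (x - t)) (hφ.comp (by fun_prop))
    (hcφ.comp_homeomorph (Homeomorph.subLeft x)) h_supp v w
  rw [setIntegral_fderiv_fderiv_smul_eq_integral h_supp] at h_zero
  rw [fderiv_fderiv_convolution_left_apply _ hcφ hφ hu, convolution_eq_swap]
  simpa [fderiv_fderiv_comp_const_sub] using h_zero

theorem exists_affineMap_eqOn_convolution (h : HasZeroWeakHessian μ Ω u)
    (hu : LocallyIntegrable u μ) {φ : E → ℝ} (hφ : ContDiff ℝ 2 φ) (hcφ : HasCompactSupport φ)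
    {s : Set E} (hs : IsOpen s) (hs' : IsPreconnected s)
    (hφs : ∀ x ∈ s, ∀ t ∈ tsupport φ, x - t ∈ Ω) :
    ∃ A : E →ᵃ[ℝ] F, Set.EqOn (φ ⋆[ContinuousLinearMap.lsmul ℝ ℝ, μ] u) A s := by
  have h_smooth : ContDiff ℝ 2 (φ ⋆[ContinuousLinearMap.lsmul ℝ ℝ, μ] u) :=
    hcφ.contDiff_convolution_left _ hφ hu
  have h_smooth' := h_smooth.fderiv_right (m := 1) (by norm_num)
  exact exists_affineMap_eqOn_of_fderiv_fderiv_eq_zero hs hs'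
    (h_smooth.differentiable (by norm_num)).differentiableOn
    (h_smooth'.differentiable (by norm_num)).differentiableOn
    fun x hx ↦ h.fderiv_fderiv_convolution_eq_zero hu hφ hcφ (hφs x hx)

theorem exists_affineMap_ae_eq_restrict_of_cthickening_subset [CompleteSpace F] {s : Set E} {δ : ℝ}
    (h : HasZeroWeakHessian μ Ω u) (hu : LocallyIntegrable u μ) (hs : IsOpen s)
    (hs' : IsConnected s) (hδ : 0 < δ) (hsΩ : Metric.cthickening δ s ⊆ Ω) :
    ∃ A : E →ᵃ[ℝ] F, u =ᵐ[μ.restrict s] A := by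
  let φ (n : ℕ) : ContDiffBump (0 : E) :=
    ⟨δ / (n + 1) / 2, δ / (n + 1), by positivity, half_lt_self (by positivity)⟩
  have hφ_le (n : ℕ) : (φ n).rOut ≤ δ := div_le_self hδ.le (by simp)
  have hφ_lim : Tendsto (fun n ↦ (φ n).rOut) atTop (𝓝 0) :=
    (tendsto_natCast_atTop_atTop.atTop_add tendsto_const_nhds).const_div_atTop δ
  have h_conv := ContDiffBump.ae_convolution_tendsto_right_of_locallyIntegrable (K := 2) hφ_lim
    (.of_forall fun n ↦ (mul_div_cancel₀ _ two_ne_zero).ge) hu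
  have h_affine (n : ℕ) : ∃ A : E →ᵃ[ℝ] F,
      Set.EqOn ((φ n).normed μ ⋆[ContinuousLinearMap.lsmul ℝ ℝ, μ] u) A s := by
    refine h.exists_affineMap_eqOn_convolution hu (φ n).contDiff_normed
      (φ n).hasCompactSupport_normed hs hs'.isPreconnected fun x hx t ht ↦ hsΩ ?_
    rw [(φ n).tsupport_normed_eq, mem_closedBall_zero_iff] at ht
    exact Metric.mem_cthickening_of_dist_le _ x _ _ hx (by simpa using ht.trans (hφ_le n))
  choose A hA using h_affine
  have h_lim : ∀ᵐ x ∂μ, x ∈ s → Tendsto (A · x) atTop (𝓝 (u x)) := by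
    filter_upwards [h_conv] with x hx hxs
    exact hx.congr fun n ↦ hA n hxs
  have h_freq : ∃ᵐ x ∂μ, x ∈ s := frequently_ae_mem_iff.2 (hs.measure_pos μ hs'.nonempty).ne'
  obtain ⟨B, hB⟩ := exists_affineMap_of_tendsto
    (affineSpan_eq_top_of_frequently_mem ((h_freq.and_eventually h_lim).mono fun x hx ↦ hx.2 hx.1))
    fun x hx ↦ ⟨u x, hx⟩
  refine ⟨B, (ae_restrict_iff' hs.measurableSet).2 ?_⟩
  filter_upwards [h_lim] with x hx hxs
  exact tendsto_nhds_unique (hx hxs) (hB x)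

theorem exists_affineMap_ae_eq_restrict [CompleteSpace F] (h : HasZeroWeakHessian μ Ω u)
    (hΩ : IsOpen Ω) (hΩ' : IsConnected Ω) (hu : LocallyIntegrableOn u Ω μ) :
    ∃ A : E →ᵃ[ℝ] F, u =ᵐ[μ.restrict Ω] A := by
  suffices ∃ f ∈ Set.range ((⇑) : (E →ᵃ[ℝ] F) → E → F), u =ᵐ[μ.restrict Ω] f by simpa using this
  refine exists_ae_eq_restrict_of_locally_ae_eq hΩ' ?_ fun x hx ↦ ?_
  · rintro _ ⟨A, rfl⟩ _ ⟨B, rfl⟩ U hU hU' hAB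
    rw [affineMap_eq_of_ae_eq_restrict hU hU' hAB]
  · obtain ⟨r, hr, hrΩ⟩ := Metric.nhds_basis_closedBall.mem_iff.1 (hΩ.mem_nhds hx)
    have hr' : 0 < r / 2 := half_pos hr
    let K := Metric.closedBall x r
    have hK : K.indicator u =ᵐ[μ.restrict K] u := indicator_ae_eq_restrict measurableSet_closedBall
    have h_int : Integrable (K.indicator u) μ :=
      (hu.integrableOn_compact_subset hrΩ (isCompact_closedBall x r)).integrable_indicator
        measurableSet_closedBall
    have h_cthickening : Metric.cthickening (r / 2) (Metric.ball x (r / 2)) ⊆ K := by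
      rw [cthickening_ball hr'.le hr', add_halves]
    obtain ⟨A, hA⟩ := ((h.mono hrΩ).congr_ae hK.symm)
      |>.exists_affineMap_ae_eq_restrict_of_cthickening_subset h_int.locallyIntegrable
        Metric.isOpen_ball (Metric.isConnected_ball hr') hr' h_cthickening
    refine ⟨_, Metric.isOpen_ball, Metric.mem_ball_self hr', A, ⟨A, rfl⟩, .trans ?_ hA⟩
    exact ae_restrict_of_ae_restrict_of_subset
      ((Metric.self_subset_cthickening _).trans h_cthickening) hK.symm

end HasZeroWeakHessian

section Affine

variable [BorelSpace E] [FiniteDimensional ℝ E] {μ : Measure E} [μ.IsAddHaarMeasure]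

theorem integral_fderiv_smul_eq_neg_integral_smul_fderiv {f : E → ℝ} {g : E → F}
    (hcf : HasCompactSupport f) (hf : ContDiff ℝ 1 f) (hg : ContDiff ℝ 1 g) (v : E) :
    ∫ x, fderiv ℝ f x v • g x ∂μ = -∫ x, f x • fderiv ℝ g x v ∂μ := by
  have hf' : Continuous (fderiv ℝ f) := hf.continuous_fderiv one_ne_zero
  have hg' : Continuous (fderiv ℝ g) := hg.continuous_fderiv one_ne_zero
  rw [integral_smul_fderiv_eq_neg_fderiv_smul_of_integrable, neg_neg]
  · exact (hf'.clm_apply continuous_const |>.smul hg.continuous).integrable_of_hasCompactSupport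
      (hcf.fderiv_apply ℝ v).smul_right
  · exact (hf.continuous.smul (hg'.clm_apply continuous_const)).integrable_of_hasCompactSupport
      hcf.smul_right
  · exact (hf.continuous.smul hg.continuous).integrable_of_hasCompactSupport hcf.smul_right
  · exact fun x _ ↦ hf.differentiable one_ne_zero x
  · exact fun x _ ↦ hg.differentiable one_ne_zero x

theorem hasZeroWeakHessian_continuousAffineMap (μ : Measure E) [μ.IsAddHaarMeasure] (Ω : Set E)
    (A : E →ᴬ[ℝ] F) : HasZeroWeakHessian μ Ω A := by
  intro φ hφ hcφ hφΩ v w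
  have hφ' : ContDiff ℝ 1 (fderiv ℝ φ) := hφ.fderiv_right (by norm_num)
  calc ∫ x in Ω, fderiv ℝ (fderiv ℝ φ) x v w • A x ∂μ
      = ∫ x, fderiv ℝ (fun y ↦ fderiv ℝ φ y w) x v • A x ∂μ := by
        simp_rw [setIntegral_fderiv_fderiv_smul_eq_integral hφΩ,
          fderiv_fderiv_apply (hφ'.differentiable one_ne_zero _)]
    _ = -∫ x, fderiv ℝ φ x w • A.contLinear v ∂μ := by
        rw [integral_fderiv_smul_eq_neg_integral_smul_fderiv (hcφ.fderiv_apply ℝ w)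
          (hφ'.clm_apply contDiff_const) A.contDiff]
        simp
    _ = 0 := by
        rw [integral_fderiv_smul_eq_neg_integral_smul_fderiv hcφ (hφ.of_le (by norm_num))
          contDiff_const]
        simp

theorem hasZeroWeakHessian_iff_exists_affineMap [CompleteSpace F] {Ω : Set E} {u : E → F}
    (hΩ : IsOpen Ω) (hΩ' : IsConnected Ω) (hu : LocallyIntegrableOn u Ω μ) :
    HasZeroWeakHessian μ Ω u ↔ ∃ A : E →ᵃ[ℝ] F, u =ᵐ[μ.restrict Ω] A := by
  refine ⟨fun h ↦ h.exists_affineMap_ae_eq_restrict hΩ hΩ' hu, fun ⟨A, hA⟩ ↦ ?_⟩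
  exact (hasZeroWeakHessian_continuousAffineMap μ Ω
    ⟨A, A.continuous_of_finiteDimensional⟩).congr_ae hA.symm

end Affine

end WeakHessian

section TestFields

theorem pd_pd {f : E2 → ℝ} (hf : ContDiff ℝ 2 f) (i j : Fin 2) (x : E2) :
    pd i (pd j f) x =
      fderiv ℝ (fderiv ℝ f) x (EuclideanSpace.single i 1) (EuclideanSpace.single j 1) :=
  have hf' : ContDiff ℝ 1 (fderiv ℝ f) := hf.fderiv_right (by norm_num)
  fderiv_fderiv_apply (hf'.differentiable one_ne_zero x) _ _

theorem pd_const_mul (i : Fin 2) (c : ℝ) (f : E2 → ℝ) :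
    pd i (fun x ↦ c * f x) = fun x ↦ c * pd i f x := by
  ext x
  change fderiv ℝ (c • f) x _ = _
  simp [pd, fderiv_const_smul_field]

theorem divMat_const_smul (c : ℝ) (W : E2 → Mat2) (x : E2) :
    divMat (fun y ↦ c • W y) x = c • divMat W x := by
  ext i
  fin_cases i <;> simp [divMat, vec2, pd_const_mul, mul_add]

theorem div2Mat_const_smul (c : ℝ) (W : E2 → Mat2) (x : E2) :
    div2Mat (fun y ↦ c • W y) x = c * div2Mat W x := by
  simp only [div2Mat, Matrix.smul_apply, smul_eq_mul, pd_const_mul]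
  ring

theorem tsupport_matrix_apply_subset {X m n R : Type*} [TopologicalSpace X] [Zero R]
    (W : X → Matrix m n R) (i : m) (j : n) : tsupport (fun x ↦ W x i j) ⊆ tsupport W :=
  tsupport_comp_subset (g := fun V : Matrix m n R ↦ V i j) rfl W

theorem continuous_divMat {W : E2 → Mat2} (hW : ∀ i j, ContDiff ℝ 1 fun x ↦ W x i j) :
    Continuous (divMat W) := by
  have h_pd (i j k : Fin 2) : Continuous (pd i fun x ↦ W x j k) :=
    ((hW j k).continuous_fderiv one_ne_zero).clm_apply continuous_const
  refine (PiLp.continuous_toLp 2 _).comp (continuous_pi fun i ↦ ?_)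
  fin_cases i
  · exact (h_pd 0 0 0).add (h_pd 1 0 1)
  · exact (h_pd 0 1 0).add (h_pd 1 1 1)

theorem hasCompactSupport_divMat {W : E2 → Mat2} (hW : HasCompactSupport W) :
    HasCompactSupport (divMat W) := by
  refine .intro hW fun x hx ↦ ?_
  have h_pd (i j k : Fin 2) : pd i (fun y ↦ W y j k) x = 0 := image_eq_zero_of_notMem_tsupport
    fun h ↦ hx (tsupport_matrix_apply_subset W j k (tsupport_fderiv_apply_subset ℝ _ h))
  ext i
  fin_cases i <;> simp [divMat, vec2, h_pd]

theorem Cc2Sym.const_smul {Ω : Set E2} {W : E2 → Mat2} (hW : Cc2Sym Ω W) (c : ℝ) :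
    Cc2Sym Ω fun x ↦ c • W x := by
  obtain ⟨hW_smooth, hW_compact, hWΩ, hW_symm⟩ := hW
  have h_zero : c • (0 : Mat2) = 0 := smul_zero c
  exact ⟨fun i j ↦ contDiff_const.mul (hW_smooth i j), hW_compact.comp_left h_zero,
    (tsupport_comp_subset h_zero W).trans hWΩ, fun x ↦ (hW_symm x).smul c⟩

theorem cc2Sym_smul_const {Ω : Set E2} {φ : E2 → ℝ} {S : Mat2} (hφ : ContDiff ℝ 2 φ)
    (hcφ : HasCompactSupport φ) (hφΩ : tsupport φ ⊆ Ω) (hS : S.IsSymm) :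
    Cc2Sym Ω fun x ↦ φ x • S := by
  have h_zero : (0 : ℝ) • S = 0 := zero_smul ℝ S
  exact ⟨fun i j ↦ hφ.mul contDiff_const, hcφ.comp_left (g := (· • S)) h_zero,
    (tsupport_comp_subset (g := (· • S)) h_zero φ).trans hφΩ, fun x ↦ hS.smul (φ x)⟩

theorem div2Mat_smul_const {φ : E2 → ℝ} (hφ : ContDiff ℝ 2 φ) (S : Mat2) (x : E2) :
    div2Mat (fun y ↦ φ y • S) x =
      S 0 0 * fderiv ℝ (fderiv ℝ φ) x (EuclideanSpace.single 0 1) (EuclideanSpace.single 0 1) +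
      S 1 1 * fderiv ℝ (fderiv ℝ φ) x (EuclideanSpace.single 1 1) (EuclideanSpace.single 1 1) +
      2 * (S 0 1 *
        fderiv ℝ (fderiv ℝ φ) x (EuclideanSpace.single 0 1) (EuclideanSpace.single 1 1)) := by
  simp only [div2Mat, Matrix.smul_apply, smul_eq_mul, mul_comm (φ _), pd_const_mul, pd_pd hφ]

end TestFields

section Admissibility

theorem eventually_forall_smul {R X V : Type*} [TopologicalSpace R] [Zero R] [TopologicalSpace X]
    [TopologicalSpace V] [Zero V] [SMulWithZero R V] [ContinuousSMul R V] {f : X → V}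
    (hf : Continuous f) (hcf : HasCompactSupport f) {p : V → Prop} (hp : ∀ᶠ v in 𝓝 0, p v) :
    ∀ᶠ c : R in 𝓝 0, ∀ x, p (c • f x) := by
  have h_range : ∀ᶠ c : R in 𝓝 0, ∀ v ∈ Set.range f, p (c • v) := by
    refine (hcf.isCompact_range hf).eventually_forall_of_forall_eventually fun v _ ↦ ?_
    exact (continuous_smul.tendsto' (0, v) 0 (zero_smul R v)).eventually hp
  exact h_range.mono fun c hc x ↦ hc _ ⟨x, rfl⟩

theorem ellip_mem_nhds_zero (a θ : ℝ) : Ellip a θ ∈ 𝓝 0 := by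
  have h_cont : Continuous fun x : E2 ↦ (x 0 * Real.cos θ + x 1 * Real.sin θ) ^ 2 +
      ((-(x 0) * Real.sin θ + x 1 * Real.cos θ) / a) ^ 2 := by fun_prop
  exact h_cont.continuousAt.eventually_le_const (by simp)

theorem eventually_mem_rowcol {S : Set E2} (hS : S ∈ 𝓝 0) :
    ∀ᶠ V : Mat2 in 𝓝 0, V.IsSymm → V ∈ rowcol S := by
  have h_vec2 (i j k l : Fin 2) : ∀ᶠ V : Mat2 in 𝓝 0, vec2 (V i j) (V k l) ∈ S := by
    have h_cont : Continuous fun V : Mat2 ↦ vec2 (V i j) (V k l) :=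
      (PiLp.continuous_toLp 2 _).comp (by fun_prop)
    exact h_cont.tendsto' 0 0 (by ext m; fin_cases m <;> rfl) hS
  filter_upwards [eventually_all.2 fun i ↦ h_vec2 i 0 i 1,
    eventually_all.2 fun j ↦ h_vec2 0 j 1 j] with V h_row h_col hV
  exact ⟨hV, h_row, h_col⟩

theorem eventually_mem_smul_rowcol {S : Set E2} (hS : S ∈ 𝓝 0) {l : ℝ} (hl : l ≠ 0) :
    ∀ᶠ V : Mat2 in 𝓝 0, V.IsSymm → V ∈ l • rowcol S := by
  have h_tendsto : Tendsto (fun V : Mat2 ↦ l⁻¹ • V) (𝓝 0) (𝓝 0) :=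
    (continuous_const_smul l⁻¹).tendsto' 0 0 (smul_zero _)
  filter_upwards [h_tendsto (eventually_mem_rowcol hS)] with V hV hV_symm
  exact (Set.mem_smul_set_iff_inv_smul_mem₀ hl _ _).2 (hV (hV_symm.smul _))

end Admissibility

section Kernel

theorem eventually_admissible {Ω : Set E2} {W : E2 → Mat2} (hW : Cc2Sym Ω W) (a θ : ℝ) {l0 l1 : ℝ}
    (hl0 : l0 ≠ 0) (hl1 : l1 ≠ 0) :
    ∀ᶠ c : ℝ in 𝓝 0, (∀ x, c • W x ∈ l0 • EllipM a θ) ∧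
      ∀ x, divMat (fun y ↦ c • W y) x ∈ l1 • Ellip a θ := by
  obtain ⟨hW_smooth, hW_compact, -, hW_symm⟩ := hW
  have hW_cont : Continuous W := continuous_matrix fun i j ↦ (hW_smooth i j).continuous
  have h_divMat : Continuous (divMat W) :=
    continuous_divMat fun i j ↦ (hW_smooth i j).of_le (by norm_num)
  filter_upwards [eventually_forall_smul hW_cont hW_compact
      (eventually_mem_smul_rowcol (ellip_mem_nhds_zero a θ) hl0),
    eventually_forall_smul h_divMat (hasCompactSupport_divMat hW_compact)
      ((set_smul_mem_nhds_zero_iff hl1).2 (ellip_mem_nhds_zero a θ))] with c hc hc_div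
  exact ⟨fun x ↦ hc x ((hW_symm x).smul c), fun x ↦ divMat_const_smul c W x ▸ hc_div x⟩

theorem eq_zero_of_eventually_mul_nonpos {𝕜 : Type*} [Field 𝕜] [LinearOrder 𝕜]
    [IsStrictOrderedRing 𝕜] [TopologicalSpace 𝕜] [OrderTopology 𝕜] {t : 𝕜}
    (ht : ∀ᶠ c in 𝓝 0, c * t ≤ 0) : t = 0 := by
  have h_neg : ∀ᶠ c in 𝓝 0, -c * t ≤ 0 := (continuous_neg.tendsto' (0 : 𝕜) 0 neg_zero) ht
  have h_both : ∀ᶠ c in 𝓝[≠] 0, c * t ≤ 0 ∧ -c * t ≤ 0 :=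
    (ht.and h_neg).filter_mono nhdsWithin_le_nhds
  obtain ⟨c, ⟨hc, hc_neg⟩, hc_ne⟩ := (h_both.and self_mem_nhdsWithin).exists
  exact (mul_eq_zero.1 (by linarith : c * t = 0)).resolve_left hc_ne

theorem dtgv2_eq_zero_iff_forall_integral_eq_zero (Ω : Set E2) (a θ : ℝ) {l0 l1 : ℝ}
    (hl0 : l0 ≠ 0) (hl1 : l1 ≠ 0) (u : E2 → ℝ) :
    DTGV2 Ω a θ l0 l1 u = 0 ↔ ∀ W, Cc2Sym Ω W → ∫ x in Ω, u x * div2Mat W x = 0 := by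
  simp only [DTGV2, ENNReal.iSup_eq_zero, ENNReal.ofReal_eq_zero]
  refine ⟨fun h W hW ↦ eq_zero_of_eventually_mul_nonpos ?_, fun h W hW ↦ (h W hW.1).le⟩
  filter_upwards [eventually_admissible hW a θ hl0 hl1] with c hc
  calc c * ∫ x in Ω, u x * div2Mat W x
      = ∫ x in Ω, u x * div2Mat (fun y ↦ c • W y) x := by
        simp_rw [div2Mat_const_smul, mul_left_comm _ c, integral_const_mul]
    _ ≤ 0 := h _ ⟨hW.const_smul c, fun x _ ↦ hc.1 x, fun x _ ↦ hc.2 x⟩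

theorem eq_smul_single_add_smul_single (v : E2) :
    v = v 0 • EuclideanSpace.single 0 1 + v 1 • EuclideanSpace.single 1 1 := by
  ext i
  fin_cases i <;> simp

theorem exists_div2Mat_eq_fderiv_fderiv {Ω : Set E2} {φ : E2 → ℝ} (hφ : ContDiff ℝ 2 φ)
    (hcφ : HasCompactSupport φ) (hφΩ : tsupport φ ⊆ Ω) (v w : E2) :
    ∃ W, Cc2Sym Ω W ∧ ∀ x, div2Mat W x = fderiv ℝ (fderiv ℝ φ) x v w := by
  let S : Mat2 := .of fun i j ↦ (v i * w j + w i * v j) / 2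
  have hS : S.IsSymm := .ext fun i j ↦ by simp only [S, Matrix.of_apply]; ring
  refine ⟨fun x ↦ φ x • S, cc2Sym_smul_const hφ hcφ hφΩ hS, fun x ↦ ?_⟩
  rw [div2Mat_smul_const hφ]
  set B := fderiv ℝ (fderiv ℝ φ) x
  let e (i : Fin 2) : E2 := EuclideanSpace.single i 1
  have h_symm : B (e 1) (e 0) = B (e 0) (e 1) :=
    hφ.contDiffAt.isSymmSndFDerivAt (by simp) (e 1) (e 0)
  have h_expand : B v w = v 0 * w 0 * B (e 0) (e 0) + v 0 * w 1 * B (e 0) (e 1) +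
      v 1 * w 0 * B (e 1) (e 0) + v 1 * w 1 * B (e 1) (e 1) := by
    conv_lhs => rw [eq_smul_single_add_smul_single v, eq_smul_single_add_smul_single w]
    simp only [map_add, map_smul, add_apply, smul_apply, smul_eq_mul, e]
    ring
  rw [h_expand, h_symm]
  simp only [S, Matrix.of_apply, e]
  ring

theorem forall_integral_mul_div2Mat_eq_zero_iff {Ω : Set E2} {u : E2 → ℝ}
    (hu : LocallyIntegrableOn u Ω) :
    (∀ W, Cc2Sym Ω W → ∫ x in Ω, u x * div2Mat W x = 0) ↔ HasZeroWeakHessian volume Ω u := by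
  refine ⟨fun h φ hφ hcφ hφΩ v w ↦ ?_, fun h W ⟨hW, hcW, hWΩ, _⟩ ↦ ?_⟩
  · obtain ⟨W, hW, hWφ⟩ := exists_div2Mat_eq_fderiv_fderiv hφ hcφ hφΩ v w
    simpa [hWφ, mul_comm] using h W hW
  · have h_compact (i j : Fin 2) : HasCompactSupport fun x ↦ W x i j :=
      hcW.comp_left (g := fun V : Mat2 ↦ V i j) rfl
    have h_supp (i j : Fin 2) : tsupport (fun x ↦ W x i j) ⊆ Ω :=
      (tsupport_matrix_apply_subset W i j).trans hWΩ
    let D (i j : Fin 2) (x : E2) : ℝ := fderiv ℝ (fderiv ℝ fun y ↦ W y i j) x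
      (EuclideanSpace.single i 1) (EuclideanSpace.single j 1)
    have h_int (i j : Fin 2) : IntegrableOn (fun x ↦ D i j x • u x) Ω :=
      integrableOn_fderiv_fderiv_smul (hW i j) (h_compact i j) (h_supp i j) hu _ _
    have h_zero (i j : Fin 2) : ∫ x in Ω, D i j x • u x = 0 :=
      h _ (hW i j) (h_compact i j) (h_supp i j) _ _
    calc ∫ x in Ω, u x * div2Mat W x
        = ∫ x in Ω, D 0 0 x • u x + D 1 1 x • u x + 2 * (D 0 1 x • u x) := by
          congr with x
          simp only [div2Mat, pd_pd (hW _ _), D, smul_eq_mul]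
          ring
      _ = 0 := by
          have h_diag : IntegrableOn (fun x ↦ D 0 0 x • u x + D 1 1 x • u x) Ω :=
            (h_int 0 0).add (h_int 1 1)
          rw [integral_add h_diag ((h_int 0 1).const_mul 2), integral_add (h_int 0 0) (h_int 1 1),
            integral_const_mul, h_zero, h_zero, h_zero]
          simp

theorem exists_affineMap_iff_exists_coeff (p : (E2 → ℝ) → Prop) :
    (∃ A : E2 →ᵃ[ℝ] ℝ, p A) ↔ ∃ c₀ c₁ c₂ : ℝ, p fun x ↦ c₀ + c₁ * x 0 + c₂ * x 1 := by
  constructor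
  · rintro ⟨A, hA⟩
    refine ⟨A 0, A.linear (EuclideanSpace.single 0 1), A.linear (EuclideanSpace.single 1 1), ?_⟩
    convert hA using 2 with x
    have h_linear := congrArg A.linear (eq_smul_single_add_smul_single x)
    rw [map_add, map_smul, map_smul, smul_eq_mul, smul_eq_mul] at h_linear
    rw [congrFun A.decomp x, Pi.add_apply, h_linear]
    ring
  · rintro ⟨c₀, c₁, c₂, h⟩
    let L : E2 →L[ℝ] ℝ := c₁ • EuclideanSpace.proj 0 + c₂ • EuclideanSpace.proj 1
    refine ⟨L.toLinearMap.toAffineMap + AffineMap.const ℝ E2 c₀, ?_⟩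
    convert h using 2 with x
    change c₁ * x 0 + c₂ * x 1 + c₀ = c₀ + c₁ * x 0 + c₂ * x 1
    ring

theorem dtgv2_eq_zero_iff_affine_general (Ω : Set E2) (hΩo : IsOpen Ω) (hΩc : IsConnected Ω)
    (a θ l0 l1 : ℝ) (ha : a ≠ 0) (hl0 : l0 ≠ 0) (hl1 : l1 ≠ 0) (u : E2 → ℝ)
    (hu : LocallyIntegrableOn u Ω) :
    DTGV2 Ω a θ l0 l1 u = 0 ↔
      ∃ c₀ c₁ c₂ : ℝ, ∀ᵐ x ∂(volume.restrict Ω), u x = c₀ + c₁ * x 0 + c₂ * x 1 :=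
  calc DTGV2 Ω a θ l0 l1 u = 0
      ↔ ∀ W, Cc2Sym Ω W → ∫ x in Ω, u x * div2Mat W x = 0 :=
        dtgv2_eq_zero_iff_forall_integral_eq_zero Ω a θ hl0 hl1 u
    _ ↔ HasZeroWeakHessian volume Ω u := forall_integral_mul_div2Mat_eq_zero_iff hu
    _ ↔ ∃ A : E2 →ᵃ[ℝ] ℝ, u =ᵐ[volume.restrict Ω] A :=
        hasZeroWeakHessian_iff_exists_affineMap hΩo hΩc hu
    _ ↔ ∃ c₀ c₁ c₂ : ℝ, ∀ᵐ x ∂(volume.restrict Ω), u x = c₀ + c₁ * x 0 + c₂ * x 1 :=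
        exists_affineMap_iff_exists_coeff (u =ᵐ[volume.restrict Ω] ·)

end Kernel

/-- the kernel of `DTGV²_λ` consists of the affine functions. -/
theorem dtgv2_eq_zero_iff_affine (Ω : Set E2) (hΩo : IsOpen Ω)
    (hΩc : IsConnected Ω) (hΩb : Bornology.IsBounded Ω)
    (a θ l0 l1 : ℝ) (ha : 0 < a) (ha1 : a ≤ 1) (hl0 : 0 < l0) (hl1 : 0 < l1)
    (u : E2 → ℝ) (hu : IntegrableOn u Ω) :
    DTGV2 Ω a θ l0 l1 u = 0 ↔
      ∃ c₀ c₁ c₂ : ℝ, ∀ᵐ x ∂(volume.restrict Ω), u x = c₀ + c₁ * x 0 + c₂ * x 1 :=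
  dtgv2_eq_zero_iff_affine_general Ω hΩo hΩc a θ l0 l1 ha.ne' hl0.ne' hl1.ne' u
    hu.locallyIntegrableOn
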